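/- arXiv:2007.10676 — 8 statements merged into one kernel-verified Lean document; each statement's English description precedes it below -/
import Mathlib

section
/- Let k ≥ 2 be an integer, τ a real number, and a, b > 0. Define the doubly infinite sequence u : ℤ → ℝ by u_n = 1 if n is even, u_n = a if n ≡ 3 (mod 4), and u_n = b if n ≡ 1 (mod 4). Then u satisfies the recurrence u_{i+1} = (u_{-1} + u_1 − τ)·u_i^k + τ·u_i − u_{i−1} for all i ∈ ℤ if and only if the pair (a, b) satisfies the system (a + b − τ)·b^k + τ·b − 2 = 0 and (a + b − τ)·a^k + τ·a − 2 = 0. -/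
/-!
Write the recurrence as `u (i + 1) + u (i - 1) = F (u i)`. When `u` is constant equal to `c` on
even integers and alternates between `b` and `a` on odd ones, every even site has neighbours
`a`, `b` and every odd site has neighbours `c`, `c`; so the recurrence amounts to `F c = a + b` and
`F b = F a = c + c`. For `c = 1` and `F x = (a + b - τ) x ^ k + τ x` the first equation is an
identity, because the coefficient is chosen from the same sequence, and the other two form the
system (ab).
-/

/-- The 4-periodic sequence `…, a, c, b, c, a, c, b, c, …` on `ℤ`, placed so that the values at
`-1, 0, 1, 2` are `a, c, b, c`. With `c = 1` it is the ansatz for a period-4 height-periodic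
boundary law. -/
def fourPeriodicSeq {α : Type*} (c a b : α) (n : ℤ) : α :=
  if n % 2 = 0 then c else if n % 4 = 3 then a else b

section Values

variable {α : Type*} (c a b : α) {n : ℤ}

theorem fourPeriodicSeq_of_even (hn : Even n) : fourPeriodicSeq c a b n = c :=
  if_pos (Int.even_iff.mp hn)

theorem fourPeriodicSeq_of_emod_four_eq_one (hn : n % 4 = 1) : fourPeriodicSeq c a b n = b := by
  rw [fourPeriodicSeq, if_neg (by lia), if_neg (by lia)]

theorem fourPeriodicSeq_of_emod_four_eq_three (hn : n % 4 = 3) : fourPeriodicSeq c a b n = a := by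
  rw [fourPeriodicSeq, if_neg (by lia), if_pos hn]

theorem fourPeriodicSeq_of_odd (hn : Odd n) :
    fourPeriodicSeq c a b n = b ∨ fourPeriodicSeq c a b n = a := by
  have hn4 : n % 4 = 1 ∨ n % 4 = 3 := by have := Int.odd_iff.mp hn; lia
  exact hn4.imp (fourPeriodicSeq_of_emod_four_eq_one c a b)
    (fourPeriodicSeq_of_emod_four_eq_three c a b)

end Values

section Neighbours

variable {M : Type*} (c a b : M) {n : ℤ}

theorem fourPeriodicSeq_add_one_add_sub_one_of_even [AddCommMagma M] (hn : Even n) :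
    fourPeriodicSeq c a b (n + 1) + fourPeriodicSeq c a b (n - 1) = a + b := by
  have hn4 : n % 4 = 0 ∨ n % 4 = 2 := by have := Int.even_iff.mp hn; lia
  rcases hn4 with h0 | h2
  · rw [fourPeriodicSeq_of_emod_four_eq_one c a b (by lia),
      fourPeriodicSeq_of_emod_four_eq_three c a b (by lia), add_comm]
  · rw [fourPeriodicSeq_of_emod_four_eq_three c a b (by lia),
      fourPeriodicSeq_of_emod_four_eq_one c a b (by lia)]

theorem fourPeriodicSeq_add_one_add_sub_one_of_odd [Add M] (hn : Odd n) :
    fourPeriodicSeq c a b (n + 1) + fourPeriodicSeq c a b (n - 1) = c + c := by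
  rw [fourPeriodicSeq_of_even c a b hn.add_one, fourPeriodicSeq_of_even c a b (hn.sub_odd odd_one)]

end Neighbours

theorem fourPeriodicSeq_recurrence_iff {G : Type*} [AddCommGroup G] (F : G → G) (c a b : G) :
    (∀ i : ℤ, fourPeriodicSeq c a b (i + 1) =
        F (fourPeriodicSeq c a b i) - fourPeriodicSeq c a b (i - 1)) ↔
      F c = a + b ∧ F b = c + c ∧ F a = c + c := by
  simp only [eq_sub_iff_add_eq]
  constructor
  · intro h
    have at_zero := h 0
    have at_one := h 1
    have at_three := h 3
    rw [fourPeriodicSeq_add_one_add_sub_one_of_even c a b Even.zero,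
      fourPeriodicSeq_of_even c a b Even.zero] at at_zero
    rw [fourPeriodicSeq_add_one_add_sub_one_of_odd c a b odd_one,
      fourPeriodicSeq_of_emod_four_eq_one c a b rfl] at at_one
    rw [fourPeriodicSeq_add_one_add_sub_one_of_odd c a b (by decide),
      fourPeriodicSeq_of_emod_four_eq_three c a b rfl] at at_three
    exact ⟨at_zero.symm, at_one.symm, at_three.symm⟩
  · rintro ⟨hc, hb, ha⟩ i
    rcases Int.even_or_odd i with hi | hi
    · rw [fourPeriodicSeq_add_one_add_sub_one_of_even c a b hi,
        fourPeriodicSeq_of_even c a b hi, hc]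
    · rw [fourPeriodicSeq_add_one_add_sub_one_of_odd c a b hi]
      rcases fourPeriodicSeq_of_odd c a b hi with h | h
      · rw [h, hb]
      · rw [h, ha]

theorem stmt0_general {R : Type*} [CommRing R] (k : ℕ) (τ a b : R) (u : ℤ → R)
    (hu : ∀ n : ℤ, u n = if n % 2 = 0 then 1 else if n % 4 = 3 then a else b) :
    (∀ i : ℤ, u (i + 1) = (u (-1) + u 1 - τ) * (u i) ^ k + τ * u i - u (i - 1)) ↔
      ((a + b - τ) * b ^ k + τ * b - 2 = 0 ∧
        (a + b - τ) * a ^ k + τ * a - 2 = 0) := by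
  obtain rfl : u = fourPeriodicSeq 1 a b := funext hu
  have even_equation : (a + b - τ) * 1 ^ k + τ * 1 = a + b := by
    rw [one_pow, mul_one, mul_one, sub_add_cancel]
  rw [fourPeriodicSeq_of_emod_four_eq_three 1 a b (n := -1) rfl,
    fourPeriodicSeq_of_emod_four_eq_one 1 a b (n := 1) rfl,
    fourPeriodicSeq_recurrence_iff (fun x ↦ (a + b - τ) * x ^ k + τ * x)]
  simp only [even_equation, true_and, one_add_one_eq_two, sub_eq_zero]

/-- For `k ≥ 2`, `τ : ℝ`, `a b > 0`, the period-4 sequence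
`u_n = 1` (n even), `u_n = a` (n ≡ 3 mod 4), `u_n = b` (n ≡ 1 mod 4)
satisfies the recurrence `u_{i+1} = (u_{-1} + u_1 − τ) u_i^k + τ u_i − u_{i−1}`
for all `i ∈ ℤ` iff `(a, b)` solves the system (ab). -/
theorem stmt0 (k : ℕ) (hk : 2 ≤ k) (τ a b : ℝ) (ha : 0 < a) (hb : 0 < b)
    (u : ℤ → ℝ)
    (hu : ∀ n : ℤ, u n = if n % 2 = 0 then 1 else if n % 4 = 3 then a else b) :
    (∀ i : ℤ, u (i + 1) = (u (-1) + u 1 - τ) * (u i) ^ k + τ * u i - u (i - 1)) ↔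
      ((a + b - τ) * b ^ k + τ * b - 2 = 0 ∧
        (a + b - τ) * a ^ k + τ * a - 2 = 0) :=
  stmt0_general k τ a b u hu
end

section
/- Let k ≥ 2 be an integer, 0 < θ < 1, and set τ = θ + θ^{-1}. Let u : ℤ → ℝ be a sequence of positive reals with u_0 = 1 satisfying u_{i−1} + u_{i+1} − τ·u_i = (u_{−1} + u_1 − τ)·u_i^k for all i ∈ ℤ, and assume both series Σ_{j∈ℤ} θ^{|j|}·u_j^k and Σ_{j∈ℤ} θ^{|j|}·u_j converge. Then (u_{−1} + u_1 − τ)·Σ_{j∈ℤ} θ^{|j|}·u_j^k = θ − θ^{-1}; equivalently, writing l_0 + r_0 = Σ_{j∈ℤ, j≠0} θ^{|j|}·u_j^k, one has 1 + l_0 + r_0 = (θ − θ^{-1})/(u_{−1} + u_1 − τ). -/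
open scoped BigOperators

/-! The kernel `θ ^ |j|` is a fundamental solution at `0` of the operator
`u ↦ (i ↦ u (i - 1) + u (i + 1) - (θ + θ⁻¹) u i)`: applied to it the operator gives `θ - θ⁻¹` at
`0` and `0` elsewhere. The operator is symmetric, so summing the boundary-law equation against the
kernel collapses its left-hand side to `(θ - θ⁻¹) u 0`. -/

section ThreeTerm

variable {R E : Type*} [CommRing R] [AddCommGroup E] [Module R E]

/-- The symmetric three-term difference operator on two-sided sequences, i.e. the adjacency operator
of the line `ℤ` shifted by the energy `τ`. It is the linear part of the boundary-law equation. -/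
def threeTerm (τ : R) (u : ℤ → E) (i : ℤ) : E :=
  u (i - 1) + u (i + 1) - τ • u i

/-- The discrete Wronskian (Casoratian) of a scalar sequence and a sequence of vectors, measuring
how far `threeTerm` is from being symmetric on finite intervals. -/
def casoratian (w : ℤ → R) (u : ℤ → E) (j : ℤ) : E :=
  w j • u (j + 1) - w (j + 1) • u j

theorem smul_threeTerm_eq_threeTerm_smul_add (τ : R) (w : ℤ → R) (u : ℤ → E) (j : ℤ) :
    w j • threeTerm τ u j =
      threeTerm τ w j • u j + (casoratian w u j - casoratian w u (j - 1)) := by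
  simp only [threeTerm, casoratian, sub_add_cancel, smul_eq_mul]
  module

variable [TopologicalSpace E] [IsTopologicalAddGroup E]

theorem hasSum_sub_comp_sub_one {f : ℤ → E} (hf : Summable f) :
    HasSum (fun j ↦ f j - f (j - 1)) 0 := by
  have hshift : HasSum (fun j ↦ f (j - 1)) (∑' j, f j) :=
    (Equiv.subRight (1 : ℤ)).hasSum_iff.2 hf.hasSum
  simpa only [sub_self] using hf.hasSum.sub hshift

theorem summable_casoratian {w : ℤ → R} {u : ℤ → E}
    (hsub : Summable fun j ↦ w (j - 1) • u j) (hadd : Summable fun j ↦ w (j + 1) • u j) :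
    Summable (casoratian w u) := by
  have hshift : Summable fun j ↦ w j • u (j + 1) := by
    simpa only [Function.comp_def, Equiv.coe_addRight, add_sub_cancel_right] using
      (Equiv.addRight (1 : ℤ)).summable_iff.2 hsub
  exact hshift.sub hadd

theorem hasSum_smul_threeTerm {τ : R} {w : ℤ → R} {u : ℤ → E} {a : E}
    (hcas : Summable (casoratian w u)) (ha : HasSum (fun j ↦ threeTerm τ w j • u j) a) :
    HasSum (fun j ↦ w j • threeTerm τ u j) a := by
  simpa only [smul_threeTerm_eq_threeTerm_smul_add, add_zero] using
    ha.add (hasSum_sub_comp_sub_one hcas)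

end ThreeTerm

theorem threeTerm_pow_natAbs {K : Type*} [Field K] {θ : K} (hθ : θ ≠ 0) :
    threeTerm (θ + θ⁻¹) (fun j : ℤ ↦ θ ^ j.natAbs) = Pi.single 0 (θ - θ⁻¹) := by
  have hgeom (n : ℕ) : θ ^ n + θ ^ (n + 2) - (θ + θ⁻¹) * θ ^ (n + 1) = 0 := by
    field_simp
    ring
  funext j
  simp only [threeTerm, smul_eq_mul]
  rcases lt_trichotomy j 0 with hneg | rfl | hpos
  · obtain ⟨n, rfl⟩ : ∃ n : ℕ, j = -(n + 1 : ℤ) := ⟨j.natAbs - 1, by lia⟩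
    rw [Pi.single_eq_of_ne hneg.ne, show (-(n + 1 : ℤ) - 1).natAbs = n + 2 by lia,
      show (-(n + 1 : ℤ) + 1).natAbs = n by lia, show (-(n + 1 : ℤ)).natAbs = n + 1 by lia]
    linear_combination hgeom n
  · simp
  · obtain ⟨n, rfl⟩ : ∃ n : ℕ, j = n + 1 := ⟨j.natAbs - 1, by lia⟩
    rw [Pi.single_eq_of_ne hpos.ne', show ((n + 1 : ℤ) - 1).natAbs = n by lia,
      show ((n + 1 : ℤ) + 1).natAbs = n + 2 by lia, show (n + 1 : ℤ).natAbs = n + 1 by lia]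
    exact hgeom n

section Kernel

variable {K E : Type*} [Field K] [AddCommGroup E] [Module K E] [UniformSpace E]
  [IsUniformAddGroup E] [CompleteSpace E] [ContinuousConstSMul K E] {θ : K} {u : ℤ → E}

theorem summable_pow_natAbs_add_one_smul (hθ : θ ≠ 0)
    (hu : Summable fun j : ℤ ↦ θ ^ j.natAbs • u j) :
    Summable fun j : ℤ ↦ θ ^ (j + 1).natAbs • u j := by
  have hnonneg := (hu.indicator (Set.Ici 0)).const_smul θ
  have hneg := (hu.indicator (Set.Iio 0)).const_smul θ⁻¹
  refine (hnonneg.add hneg).congr fun j ↦ ?_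
  rcases le_or_gt 0 j with hj | hj
  · simp [hj, smul_smul, ← pow_succ', show (j + 1).natAbs = j.natAbs + 1 by lia]
  · simp [hj, smul_smul, show j.natAbs = (j + 1).natAbs + 1 by lia, pow_succ', hθ]

theorem summable_pow_natAbs_sub_one_smul (hθ : θ ≠ 0)
    (hu : Summable fun j : ℤ ↦ θ ^ j.natAbs • u j) :
    Summable fun j : ℤ ↦ θ ^ (j - 1).natAbs • u j := by
  have hreflect : Summable fun j : ℤ ↦ θ ^ j.natAbs • u (-j) := by
    simpa only [Function.comp_def, Equiv.neg_apply, Int.natAbs_neg] using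
      (Equiv.neg ℤ).summable_iff.2 hu
  refine ((Equiv.neg ℤ).summable_iff.2
    (summable_pow_natAbs_add_one_smul hθ hreflect)).congr fun j ↦ ?_
  simp [show (-j + 1).natAbs = (j - 1).natAbs by lia]

theorem hasSum_pow_natAbs_smul_threeTerm (hθ : θ ≠ 0)
    (hu : Summable fun j : ℤ ↦ θ ^ j.natAbs • u j) :
    HasSum (fun j : ℤ ↦ θ ^ j.natAbs • threeTerm (θ + θ⁻¹) u j) ((θ - θ⁻¹) • u 0) := by
  refine hasSum_smul_threeTerm (w := fun j : ℤ ↦ θ ^ j.natAbs)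
    (summable_casoratian (summable_pow_natAbs_sub_one_smul hθ hu)
      (summable_pow_natAbs_add_one_smul hθ hu)) ?_
  rw [threeTerm_pow_natAbs hθ]
  convert hasSum_single (0 : ℤ) fun j hj ↦ ?_ using 1
  · rw [Pi.single_eq_same]
  · rw [Pi.single_eq_of_ne hj, zero_smul]

end Kernel

theorem add_tsum_subtype_ne {ι E : Type*} [AddCommGroup E] [TopologicalSpace E]
    [IsTopologicalAddGroup E] [T2Space E] {f : ι → E} (hf : Summable f) (i : ι) :
    f i + ∑' j : {j // j ≠ i}, f j = ∑' j, f j := by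
  rw [← hf.sum_add_tsum_compl (s := {i}), Finset.sum_singleton, Finset.coe_singleton]
  rfl

theorem stmt2_general {K : Type*} [Field K] [UniformSpace K] [IsUniformAddGroup K]
    [IsTopologicalRing K] [CompleteSpace K] [T2Space K] (k : ℕ) (θ : K) (hθ0 : θ ≠ 0)
    (hθ1 : θ ^ 2 ≠ 1) (τ : K) (hτ : τ = θ + θ⁻¹) (u : ℤ → K) (hu0 : u 0 = 1)
    (hrec : ∀ i : ℤ,
      u (i - 1) + u (i + 1) - τ * u i = (u (-1) + u 1 - τ) * u i ^ k)
    (hsum : Summable (fun j : ℤ => θ ^ j.natAbs * u j)) :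
    Summable (fun j : ℤ => θ ^ j.natAbs * u j ^ k) ∧
      (u (-1) + u 1 - τ) * (∑' j : ℤ, θ ^ j.natAbs * u j ^ k) = θ - θ⁻¹ ∧
      1 + (∑' j : {j : ℤ // j ≠ 0}, θ ^ (j : ℤ).natAbs * u (j : ℤ) ^ k) =
        (θ - θ⁻¹) / (u (-1) + u 1 - τ) := by
  set c := u (-1) + u 1 - τ
  have hboundary (i : ℤ) : threeTerm (θ + θ⁻¹) u i = c * u i ^ k := hτ ▸ hrec i
  have hweighted : HasSum (fun j : ℤ ↦ c * (θ ^ j.natAbs * u j ^ k)) (θ - θ⁻¹) := by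
    simpa only [hboundary, hu0, smul_eq_mul, mul_one, mul_left_comm c] using
      hasSum_pow_natAbs_smul_threeTerm hθ0 hsum
  have htotal : c * (∑' j : ℤ, θ ^ j.natAbs * u j ^ k) = θ - θ⁻¹ :=
    tsum_mul_left.symm.trans hweighted.tsum_eq
  have hθsub : θ - θ⁻¹ ≠ 0 := fun h ↦
    hθ1 (by rw [pow_two, ← mul_inv_cancel₀ hθ0, ← sub_eq_zero.1 h])
  have hc : c ≠ 0 := left_ne_zero_of_mul (htotal ▸ hθsub)
  have hsumk := (summable_mul_left_iff hc).1 hweighted.summable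
  refine ⟨hsumk, htotal, ?_⟩
  rw [← htotal, mul_div_cancel_left₀ _ hc, ← add_tsum_subtype_ne hsumk 0]
  simp [hu0]

/-- For `k ≥ 2`, `0 < θ < 1`, `τ = θ + θ⁻¹`, and a positive
sequence `u` with `u 0 = 1` satisfying the three-term relation, if
`Σ_{j∈ℤ} θ^{|j|} u_j^k` and `Σ_{j∈ℤ} θ^{|j|} u_j` converge, then
`(u_{−1} + u_1 − τ) Σ_{j∈ℤ} θ^{|j|} u_j^k = θ − θ⁻¹`; equivalently,
`1 + l_0 + r_0 = (θ − θ⁻¹)/(u_{−1} + u_1 − τ)`. -/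
theorem stmt2 (k : ℕ) (hk : 2 ≤ k) (θ : ℝ) (hθ0 : 0 < θ) (hθ1 : θ < 1)
    (τ : ℝ) (hτ : τ = θ + θ⁻¹)
    (u : ℤ → ℝ) (hupos : ∀ i : ℤ, 0 < u i) (hu0 : u 0 = 1)
    (hrec : ∀ i : ℤ,
      u (i - 1) + u (i + 1) - τ * u i = (u (-1) + u 1 - τ) * u i ^ k)
    (hsum1 : Summable (fun j : ℤ => θ ^ j.natAbs * u j ^ k))
    (hsum2 : Summable (fun j : ℤ => θ ^ j.natAbs * u j)) :
    (u (-1) + u 1 - τ) * (∑' j : ℤ, θ ^ j.natAbs * u j ^ k) = θ - θ⁻¹ ∧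
      1 + (∑' j : {j : ℤ // j ≠ 0}, θ ^ (j : ℤ).natAbs * u (j : ℤ) ^ k) =
        (θ - θ⁻¹) / (u (-1) + u 1 - τ) :=
  (stmt2_general k θ hθ0.ne' (pow_lt_one₀ hθ0.le hθ1 two_ne_zero).ne τ hτ u hu0 hrec hsum2).2
end

section
/- Let k ≥ 2 be an integer and τ a real number. If a, b > 0 with a ≠ b satisfy the system (a + b − τ)·b^k + τ·b − 2 = 0 and (a + b − τ)·a^k + τ·a − 2 = 0, then with x = a/b one has (x^{k−1} + x^{k−2} + ⋯ + x^2 + x)·(τ·b − 2) − 2 = 0. -/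
open scoped BigOperators

/-!
Eliminating the common coefficient `a + b - τ` of the `k`-th powers between the two equations and
dividing by `b ^ k` gives `x ^ k * (τ * b - 2) = x * (τ * b) - 2` for `x = a / b`. The value `x = 1`
always solves this equation and is excluded by `a ≠ b`, so the factor `x - 1` can be cancelled; the
quotient is the claim, because `x ^ k - x = (x + ⋯ + x ^ (k - 1)) * (x - 1)`.
-/

theorem mul_eq_mul_of_mul_add_eq_zero {R : Type*} [CommRing R] {c p q u v : R}
    (hu : c * p + u = 0) (hv : c * q + v = 0) : q * u = p * v := by
  linear_combination q * hu - p * hv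

theorem sum_Ico_pow_mul_sub_eq_iff {R : Type*} [CommRing R] [NoZeroDivisors R] {k : ℕ}
    (hk : 1 ≤ k) {x : R} (hx : x ≠ 1) (t d : R) :
    (∑ j ∈ Finset.Ico 1 k, x ^ j) * (t - d) = d ↔ x ^ k * (t - d) = x * t - d := by
  have hsum : (∑ j ∈ Finset.Ico 1 k, x ^ j) * (x - 1) = x ^ k - x := by
    simpa only [pow_one] using geom_sum_Ico_mul x hk
  have hfactor : x ^ k * (t - d) - (x * t - d) =
      ((∑ j ∈ Finset.Ico 1 k, x ^ j) * (t - d) - d) * (x - 1) := by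
    linear_combination -(t - d) * hsum
  rw [← sub_eq_zero, ← sub_eq_zero (a := x ^ k * (t - d)), hfactor,
    mul_eq_zero_iff_right (sub_ne_zero.mpr hx)]

theorem stmt5_general {K : Type*} [Field K] {k : ℕ} (hk : 1 ≤ k) {a b c d τ : K}
    (hb : b ≠ 0) (hab : a ≠ b)
    (h1 : c * b ^ k + τ * b - d = 0) (h2 : c * a ^ k + τ * a - d = 0) :
    (∑ j ∈ Finset.Icc 1 (k - 1), (a / b) ^ j) * (τ * b - d) - d = 0 := by
  have hx : a / b ≠ 1 := mt (div_eq_one_iff_eq hb).mp hab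
  have helim : a ^ k * (τ * b - d) = b ^ k * (τ * a - d) := by
    rw [add_sub_assoc] at h1 h2
    exact mul_eq_mul_of_mul_add_eq_zero h1 h2
  have hratio : (a / b) ^ k * (τ * b - d) = a / b * (τ * b) - d := by
    calc (a / b) ^ k * (τ * b - d) = a ^ k * (τ * b - d) / b ^ k := by
          rw [div_pow, div_mul_eq_mul_div]
      _ = τ * a - d := by rw [helim, mul_div_cancel_left₀ _ (pow_ne_zero k hb)]
      _ = a / b * (τ * b) - d := by rw [mul_left_comm, div_mul_cancel₀ a hb]
  rw [Finset.Icc_sub_one_right_eq_Ico_of_not_isMin (zero_lt_one.trans_le hk).not_isMin, sub_eq_zero]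
  exact (sum_Ico_pow_mul_sub_eq_iff hk hx _ _).mpr hratio

/-- If `a ≠ b` are positive solutions of system (ab), then with
`x = a/b` one has `(x^{k−1} + ⋯ + x)(τ b − 2) − 2 = 0`. -/
theorem stmt5 (k : ℕ) (hk : 2 ≤ k) (τ a b : ℝ) (ha : 0 < a) (hb : 0 < b)
    (hab : a ≠ b)
    (h1 : (a + b - τ) * b ^ k + τ * b - 2 = 0)
    (h2 : (a + b - τ) * a ^ k + τ * a - 2 = 0) :
    (∑ j ∈ Finset.Icc 1 (k - 1), (a / b) ^ j) * (τ * b - 2) - 2 = 0 :=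
  stmt5_general (one_le_two.trans hk) hb.ne' hab h1 h2
end

section
/- Let k ≥ 2 be an integer, τ a real number, and b > 0 with τ·b − 2 ≤ 0. Then there is no a > 0 with a ≠ b such that (a, b) satisfies the system (a + b − τ)·b^k + τ·b − 2 = 0 and (a + b − τ)·a^k + τ·a − 2 = 0. -/
/-!
Put `f x = c * x ^ k + τ * x` with `c = a + b - τ`, so that the system says `f a = f b = 2`.
The first equation and `τ * b ≤ 2` force `0 ≤ c`. Then `f x / x = c * x ^ (k - 1) + τ` is monotone
in `x > 0`, so `f` is strictly increasing where it is positive, and `f` takes the value `2` at most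
once on the positive half-line.
-/

section OrderedSemiring

variable {R : Type*} [CommSemiring R] {k : ℕ} {c τ : R}

-- This is monotonicity of `x ↦ (c * x ^ k + τ * x) / x`, with the denominators cleared.
lemma mul_mul_pow_add_mul_le [PartialOrder R] [IsOrderedRing R] {x y : R}
    (hk : k ≠ 0) (hc : 0 ≤ c) (hx : 0 ≤ x) (hxy : x ≤ y) :
    y * (c * x ^ k + τ * x) ≤ x * (c * y ^ k + τ * y) := by
  obtain ⟨n, rfl⟩ := Nat.exists_eq_succ_of_ne_zero hk
  have hy : 0 ≤ y := hx.trans hxy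
  calc y * (c * x ^ (n + 1) + τ * x) = c * x * y * x ^ n + τ * x * y := by ring
    _ ≤ c * x * y * y ^ n + τ * x * y := by gcongr
    _ = x * (c * y ^ (n + 1) + τ * y) := by ring

variable [LinearOrder R] [IsStrictOrderedRing R]

lemma strictMonoOn_mul_pow_add_mul (hk : k ≠ 0) (hc : 0 ≤ c) :
    StrictMonoOn (fun x ↦ c * x ^ k + τ * x) {x | 0 < x ∧ 0 < c * x ^ k + τ * x} := by
  rintro x ⟨hx, hfx⟩ y - hxy
  refine lt_of_mul_lt_mul_left ?_ hx.le
  calc x * (c * x ^ k + τ * x) < y * (c * x ^ k + τ * x) := mul_lt_mul_of_pos_right hxy hfx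
    _ ≤ x * (c * y ^ k + τ * y) := mul_mul_pow_add_mul_le hk hc hx.le hxy.le

theorem stmt6_general {a b d : R} (hk : k ≠ 0) (hd : 0 < d) (ha : 0 < a) (hb : 0 < b)
    (hτb : τ * b ≤ d) (hfb : c * b ^ k + τ * b = d) (hfa : c * a ^ k + τ * a = d) :
    a = b := by
  have hcb : 0 ≤ c * b ^ k := le_add_iff_nonneg_left (τ * b) |>.mp (hτb.trans_eq hfb.symm)
  have hc : 0 ≤ c := nonneg_of_mul_nonneg_left hcb (pow_pos hb k)
  exact (strictMonoOn_mul_pow_add_mul hk hc).injOn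
    ⟨ha, hd.trans_eq hfa.symm⟩ ⟨hb, hd.trans_eq hfb.symm⟩ (hfa.trans hfb.symm)

end OrderedSemiring

/-- If `b > 0` and `τ b − 2 ≤ 0`, there is no `a > 0`, `a ≠ b`,
such that `(a, b)` solves system (ab). -/
theorem stmt6 (k : ℕ) (hk : 2 ≤ k) (τ b : ℝ) (hb : 0 < b)
    (hτb : τ * b - 2 ≤ 0) :
    ¬ ∃ a : ℝ, 0 < a ∧ a ≠ b ∧
      (a + b - τ) * b ^ k + τ * b - 2 = 0 ∧
      (a + b - τ) * a ^ k + τ * a - 2 = 0 := by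
  rintro ⟨a, ha, hne, hfb, hfa⟩
  exact hne <| stmt6_general (by lia) two_pos ha hb
    (sub_nonpos.mp hτb) (sub_eq_zero.mp hfb) (sub_eq_zero.mp hfa)
end

section
/- Let k ≥ 2 be an integer and τ a real number, and let b > 0 satisfy τ·b = 2 + 2/(k − 1). Then there is no a > 0 with a ≠ b such that (a, b) satisfies the system (a + b − τ)·b^k + τ·b − 2 = 0 and (a + b − τ)·a^k + τ·a − 2 = 0. -/
/-!
Put `f x = c * x ^ p + τ * x - d`, with `c = a + b - τ` and `d = 2` in the system. If `f b = 0`, the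
condition `τ * b = d + d / (p - 1)` says exactly that `f' b = 0`, so `b` is a double root and `f x`
is `c` times the gap between `x ^ p` and its tangent line at `b`. This gap is positive for `x ≠ b`
by strict convexity, and `c ≠ 0`; hence `f` has no other nonnegative root.
-/

section

variable {a b c d p τ : ℝ}

theorem rpow_add_mul_rpow_sub_one_mul_sub_lt_rpow (hp : 1 < p) (hb : 0 < b) (ha : 0 ≤ a)
    (hab : a ≠ b) : b ^ p + p * b ^ (p - 1) * (a - b) < a ^ p := by
  have bernoulli : 1 + p * (a / b - 1) < (a / b) ^ p := by
    have h := one_add_mul_self_lt_rpow_one_add (s := a / b - 1)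
      (by linarith [div_nonneg ha hb.le]) (sub_ne_zero.mpr (mt (div_eq_one_iff_eq hb.ne').mp hab))
      hp
    rwa [add_sub_cancel] at h
  calc b ^ p + p * b ^ (p - 1) * (a - b) = (1 + p * (a / b - 1)) * b ^ p := by
        rw [Real.rpow_sub_one hb.ne']
        field_simp
    _ < (a / b) ^ p * b ^ p := by gcongr
    _ = a ^ p := by
        rw [← Real.mul_rpow (div_nonneg ha hb.le) hb.le, div_mul_cancel₀ a hb.ne']

theorem mul_rpow_sub_one_eq_neg_of_root (hp : p ≠ 1) (hb : b ≠ 0)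
    (hτb : τ * b = d + d / (p - 1)) (hroot : c * b ^ p + τ * b - d = 0) :
    c * (p * b ^ (p - 1)) = -τ := by
  have hp' : p - 1 ≠ 0 := sub_ne_zero.mpr hp
  have hτb' : (p - 1) * (τ * b) = p * d := by
    rw [hτb]
    field_simp
    ring
  rw [Real.rpow_sub_one hb]
  field_simp
  linear_combination p * hroot - hτb'

theorem mul_rpow_add_mul_sub_eq_mul_rpow_sub_tangent (hp : p ≠ 1) (hb : b ≠ 0)
    (hτb : τ * b = d + d / (p - 1)) (hroot : c * b ^ p + τ * b - d = 0) :
    c * a ^ p + τ * a - d = c * (a ^ p - (b ^ p + p * b ^ (p - 1) * (a - b))) := by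
  linear_combination hroot + (a - b) * mul_rpow_sub_one_eq_neg_of_root hp hb hτb hroot

theorem coeff_ne_zero_of_root (hp : p ≠ 1) (hd : d ≠ 0)
    (hτb : τ * b = d + d / (p - 1)) (hroot : c * b ^ p + τ * b - d = 0) : c ≠ 0 := by
  rintro rfl
  have : d / (p - 1) = 0 := by linear_combination hroot - hτb
  exact div_ne_zero hd (sub_ne_zero.mpr hp) this

theorem stmt8_general (hp : 1 < p) (hd : d ≠ 0) (hb : 0 < b) (hτb : τ * b = d + d / (p - 1))
    (ha : 0 ≤ a) (hrootb : c * b ^ p + τ * b - d = 0) (hroota : c * a ^ p + τ * a - d = 0) :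
    a = b := by
  by_contra hab
  have gap_pos := sub_pos.mpr (rpow_add_mul_rpow_sub_one_mul_sub_lt_rpow hp hb ha hab)
  have hc : c ≠ 0 := coeff_ne_zero_of_root hp.ne' hd hτb hrootb
  rw [mul_rpow_add_mul_sub_eq_mul_rpow_sub_tangent hp.ne' hb.ne' hτb hrootb] at hroota
  exact mul_ne_zero hc gap_pos.ne' hroota

end

/-- If `b > 0` satisfies `τ b = 2 + 2/(k − 1)`, there is no
`a > 0`, `a ≠ b`, such that `(a, b)` solves system (ab). -/
theorem stmt8 (k : ℕ) (hk : 2 ≤ k) (τ b : ℝ) (hb : 0 < b)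
    (hτb : τ * b = 2 + 2 / ((k : ℝ) - 1)) :
    ¬ ∃ a : ℝ, 0 < a ∧ a ≠ b ∧
      (a + b - τ) * b ^ k + τ * b - 2 = 0 ∧
      (a + b - τ) * a ^ k + τ * a - 2 = 0 := by
  rintro ⟨a, ha, hab, hrootb, hroota⟩
  exact hab (stmt8_general (Nat.one_lt_cast.mpr hk) two_ne_zero hb hτb ha.le
    (mod_cast hrootb) (mod_cast hroota))
end

section
/- Let k ≥ 2 be an integer and τ > 2 a real number, and let Q(a) = 2·a^k + (2 − τ)·(a^{k−1} + a^{k−2} + ⋯ + a) + 2. Then Q has at most two roots in (0, ∞). -/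
open scoped BigOperators

/-!
At two positive roots `a` and `b` of `c (x ^ k + 1) + d (x + ⋯ + x ^ (k - 1))`, the ratio of the
middle sum to `x ^ k + 1` is the same, so its cross-multiplied difference vanishes. As both
polynomials are palindromic of degree `k`, that difference is `(b - a) * (a * b - 1)` times a
nonzero polynomial in `a` and `b` with nonnegative coefficients. Hence distinct positive roots
are inverse to each other.
-/

theorem encard_le_two_of_eq_or_mul_eq_one {M : Type*} [Monoid M] {s : Set M}
    (h : ∀ a ∈ s, ∀ b ∈ s, a = b ∨ a * b = 1) : s.encard ≤ 2 := by
  obtain rfl | ⟨a, ha⟩ := s.eq_empty_or_nonempty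
  · simp
  have others_le_one : (s \ {a}).encard ≤ 1 := by
    refine Set.encard_le_one_iff.mpr fun b c hb hc => ?_
    exact left_inv_eq_right_inv ((h b hb.1 a ha).resolve_left hb.2)
      ((h a ha c hc.1).resolve_left (Ne.symm hc.2))
  calc s.encard = (s \ {a}).encard + 1 := (Set.encard_sdiff_singleton_add_one ha).symm
    _ ≤ 1 + 1 := by gcongr
    _ = 2 := one_add_one_eq_two

theorem pow_add_one_mul_sum_Ico_pow_sub_swap {R : Type*} [CommRing R] (k : ℕ) (a b : R) :
    (b ^ k + 1) * ∑ j ∈ Finset.Ico 1 k, a ^ j - (a ^ k + 1) * ∑ j ∈ Finset.Ico 1 k, b ^ j =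
      ∑ j ∈ Finset.Ico 1 k, (b ^ (k - j) - a ^ (k - j)) * ((a * b) ^ j - 1) := by
  have reflect (x : R) : ∑ j ∈ Finset.Ico 1 k, x ^ (k - j) = ∑ j ∈ Finset.Ico 1 k, x ^ j := by
    simpa only [add_tsub_cancel_left, add_tsub_cancel_right] using
      Finset.sum_Ico_reflect (x ^ ·) 1 k.le_succ
  have expand : ∀ j ∈ Finset.Ico 1 k, (b ^ (k - j) - a ^ (k - j)) * ((a * b) ^ j - 1) =
      b ^ k * a ^ j - a ^ k * b ^ j - b ^ (k - j) + a ^ (k - j) := by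
    intro j hj
    have hjk : j ≤ k := (Finset.mem_Ico.mp hj).2.le
    rw [← pow_sub_mul_pow a hjk, ← pow_sub_mul_pow b hjk]
    ring
  rw [Finset.sum_congr rfl expand]
  simp only [Finset.sum_add_distrib, Finset.sum_sub_distrib, ← Finset.mul_sum, reflect]
  ring

theorem pow_add_one_mul_sum_Ico_pow_sub_swap_eq_mul_sum {R : Type*} [CommRing R] (k : ℕ) (a b : R) :
    (b ^ k + 1) * ∑ j ∈ Finset.Ico 1 k, a ^ j - (a ^ k + 1) * ∑ j ∈ Finset.Ico 1 k, b ^ j =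
      (b - a) * (a * b - 1) * ∑ j ∈ Finset.Ico 1 k,
        (∑ i ∈ Finset.range (k - j), b ^ i * a ^ (k - j - 1 - i)) *
          ∑ i ∈ Finset.range j, (a * b) ^ i := by
  rw [pow_add_one_mul_sum_Ico_pow_sub_swap, Finset.mul_sum]
  refine Finset.sum_congr rfl fun j _ => ?_
  rw [← geom_sum₂_mul, ← geom_sum_mul]
  ring

theorem geom_sum₂_pos {R : Type*} [Semiring R] [PartialOrder R] [IsStrictOrderedRing R]
    {x y : R} (hx : 0 < x) (hy : 0 < y) {n : ℕ} (hn : n ≠ 0) :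
    0 < ∑ i ∈ Finset.range n, x ^ i * y ^ (n - 1 - i) :=
  Finset.sum_pos (fun _ _ => by positivity) (Finset.nonempty_range_iff.mpr hn)

section OrderedRing

variable {R : Type*} [CommRing R] [LinearOrder R] [IsStrictOrderedRing R]

theorem eq_or_mul_eq_one_of_pow_add_one_mul_sum_Ico_pow_eq {k : ℕ} (hk : 1 < k) {a b : R}
    (ha : 0 < a) (hb : 0 < b)
    (h : (b ^ k + 1) * ∑ j ∈ Finset.Ico 1 k, a ^ j = (a ^ k + 1) * ∑ j ∈ Finset.Ico 1 k, b ^ j) :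
    a = b ∨ a * b = 1 := by
  have cofactor_pos : 0 < ∑ j ∈ Finset.Ico 1 k,
      (∑ i ∈ Finset.range (k - j), b ^ i * a ^ (k - j - 1 - i)) *
        ∑ i ∈ Finset.range j, (a * b) ^ i := by
    refine Finset.sum_pos (fun j hj => ?_) (Finset.nonempty_Ico.mpr hk)
    obtain ⟨hj1, hjk⟩ := Finset.mem_Ico.mp hj
    exact mul_pos (geom_sum₂_pos hb ha (Nat.sub_ne_zero_of_lt hjk))
      (geom_sum_pos (mul_pos ha hb).le (Nat.one_le_iff_ne_zero.mp hj1))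
  have factored := pow_add_one_mul_sum_Ico_pow_sub_swap_eq_mul_sum k a b
  rw [sub_eq_zero.mpr h, eq_comm, mul_eq_zero_iff_right cofactor_pos.ne', mul_eq_zero] at factored
  exact factored.imp (fun hab => (sub_eq_zero.mp hab).symm) sub_eq_zero.mp

theorem eq_or_mul_eq_one_of_palindromic_eq_zero {k : ℕ} {c d : R} (hc : c ≠ 0) {a b : R}
    (ha : 0 < a) (hb : 0 < b)
    (hQa : c * a ^ k + d * ∑ j ∈ Finset.Ico 1 k, a ^ j + c = 0)
    (hQb : c * b ^ k + d * ∑ j ∈ Finset.Ico 1 k, b ^ j + c = 0) :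
    a = b ∨ a * b = 1 := by
  have hk : 1 < k := by
    by_contra! hk
    have ends_eq_zero : c * (a ^ k + 1) = 0 := by
      simpa only [Finset.Ico_eq_empty_of_le hk, Finset.sum_empty, mul_zero, add_zero,
        mul_add, mul_one] using hQa
    exact mul_ne_zero hc (by positivity) ends_eq_zero
  refine eq_or_mul_eq_one_of_pow_add_one_mul_sum_Ico_pow_eq hk ha hb (mul_left_cancel₀ hc ?_)
  linear_combination (∑ j ∈ Finset.Ico 1 k, a ^ j) * hQb - (∑ j ∈ Finset.Ico 1 k, b ^ j) * hQa

theorem stmt13_general (k : ℕ) {c : R} (hc : c ≠ 0) (d : R) :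
    {a : R | 0 < a ∧ c * a ^ k + d * (∑ j ∈ Finset.Ico 1 k, a ^ j) + c = 0}.encard ≤ 2 :=
  encard_le_two_of_eq_or_mul_eq_one fun _ ha _ hb =>
    eq_or_mul_eq_one_of_palindromic_eq_zero hc ha.1 hb.1 ha.2 hb.2

end OrderedRing

/-- For `τ > 2`, `Q(a) = 2 a^k + (2 − τ)(a^{k−1} + ⋯ + a) + 2`
has at most two roots in `(0, ∞)`. -/
theorem stmt13 (k : ℕ) (hk : 2 ≤ k) (τ : ℝ) (hτ : 2 < τ) (Q : ℝ → ℝ)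
    (hQ : ∀ a : ℝ, Q a = 2 * a ^ k + (2 - τ) * (∑ j ∈ Finset.Icc 1 (k - 1), a ^ j) + 2) :
    {a : ℝ | 0 < a ∧ Q a = 0}.encard ≤ 2 := by
  simpa only [hQ, Finset.Icc_sub_one_right_eq_Ico_of_not_isMin
    (not_isMin_of_lt (one_lt_two.trans_le hk))] using
    stmt13_general k two_ne_zero (2 - τ)
end

section
/- Let k ≥ 2 be an integer and τ > 2 a real number, let Q(a) = 2·a^k + (2 − τ)·(a^{k−1} + a^{k−2} + ⋯ + a) + 2, and let a_c > 0 be the unique positive root of Q′. Then: if Q(a_c) < 0, Q has exactly two roots in (0, ∞); if Q(a_c) = 0, Q has exactly one root in (0, ∞); and if Q(a_c) > 0, Q has no root in (0, ∞). -/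
open scoped BigOperators

/-!
Since `Q′(0) = 2 - τ < 0` and `Q(a) → +∞`, while `a_c` is the only positive zero of `Q′`, Darboux's
theorem makes `Q` strictly decreasing on `[0, a_c]` and strictly increasing on `[a_c, ∞)`. As
`Q(0) = 2 > 0`, the sign of the minimum `Q(a_c)` decides how many times `Q` vanishes on `(0, ∞)`.
-/

open Set Filter Polynomial

section LevelSets

variable {α β : Type*} [LinearOrder α] {f : α → β} {a c : α}

theorem apply_lt_of_strictAntiOn_of_strictMonoOn [Preorder β]
    (hanti : StrictAntiOn f (Icc a c)) (hmono : StrictMonoOn f (Ici c)) {x : α}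
    (hax : a ≤ x) (hxc : x ≠ c) : f c < f x := by
  rcases hxc.lt_or_gt with hlt | hgt
  · exact hanti ⟨hax, hlt.le⟩ ⟨hax.trans hlt.le, le_rfl⟩ hlt
  · exact hmono self_mem_Ici hgt.le hgt

theorem setOf_lt_and_apply_eq_eq_empty [Preorder β]
    (hanti : StrictAntiOn f (Icc a c)) (hmono : StrictMonoOn f (Ici c)) {y : β} (hy : y < f c) :
    {x | a < x ∧ f x = y} = ∅ := by
  refine eq_empty_of_forall_notMem ?_
  rintro x ⟨hax, rfl⟩
  have hxc : x ≠ c := fun h => hy.ne (congrArg f h)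
  exact lt_asymm hy (apply_lt_of_strictAntiOn_of_strictMonoOn hanti hmono hax.le hxc)

theorem setOf_lt_and_apply_eq_eq_singleton [Preorder β]
    (hanti : StrictAntiOn f (Icc a c)) (hmono : StrictMonoOn f (Ici c)) {y : β} (hac : a < c)
    (hy : f c = y) : {x | a < x ∧ f x = y} = {c} := by
  refine eq_singleton_iff_unique_mem.2 ⟨⟨hac, hy⟩, fun x ⟨hax, hx⟩ => ?_⟩
  by_contra hxc
  exact (apply_lt_of_strictAntiOn_of_strictMonoOn hanti hmono hax.le hxc).ne (hy.trans hx.symm)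

theorem setOf_lt_and_apply_eq_eq_pair [PartialOrder β]
    (hanti : StrictAntiOn f (Icc a c)) (hmono : StrictMonoOn f (Ici c)) {u v : α} {y : β}
    (hu : u ∈ Ioc a c) (hfu : f u = y) (hv : v ∈ Ici c) (hfv : f v = y) :
    {x | a < x ∧ f x = y} = {u, v} := by
  ext x
  constructor
  · rintro ⟨hax, hx⟩
    rcases le_total x c with hxc | hcx
    · exact Or.inl (hanti.injOn ⟨hax.le, hxc⟩ (Ioc_subset_Icc_self hu) (hx.trans hfu.symm))
    · exact Or.inr (hmono.injOn hcx hv (hx.trans hfv.symm))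
  · rintro (rfl | rfl)
    · exact ⟨hu.1, hfu⟩
    · exact ⟨hu.1.trans_le (hu.2.trans hv), hfv⟩

end LevelSets

theorem encard_setOf_lt_and_apply_eq_eq_two {α β : Type*}
    [ConditionallyCompleteLinearOrder α] [TopologicalSpace α] [OrderTopology α] [DenselyOrdered α]
    [LinearOrder β] [TopologicalSpace β] [OrderClosedTopology β]
    {f : α → β} {a c : α} {y : β} (hcont : ContinuousOn f (Ici a))
    (hanti : StrictAntiOn f (Icc a c)) (hmono : StrictMonoOn f (Ici c))
    (htop : Tendsto f atTop atTop) (hac : a ≤ c) (hcy : f c < y) (hya : y < f a) :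
    {x | a < x ∧ f x = y}.encard = 2 := by
  obtain ⟨u, hu, hfu⟩ := intermediate_value_Ioo' hac (hcont.mono Icc_subset_Ici_self) ⟨hcy, hya⟩
  obtain ⟨v, hv, hfv⟩ := intermediate_value_Ioi (hcont.mono (Ici_subset_Ici.2 hac)) htop hcy
  rw [setOf_lt_and_apply_eq_eq_pair hanti hmono (Ioo_subset_Ioc_self hu) hfu
    (Ioi_subset_Ici_self hv) hfv, encard_pair (hu.2.trans hv).ne]

section Darboux

variable {f f' : ℝ → ℝ} {a c : ℝ}

theorem strictAntiOn_Icc_of_hasDerivWithinAt_ne_zero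
    (hf : ∀ x ∈ Icc a c, HasDerivWithinAt f (f' x) (Icc a c) x) (ha : f' a < 0)
    (hne : ∀ x ∈ Ioo a c, f' x ≠ 0) : StrictAntiOn f (Icc a c) := by
  have hderiv_ne : ∀ x ∈ Ico a c, f' x ≠ 0 := fun x hx => by
    rcases hx.1.eq_or_lt with rfl | hax
    exacts [ha.ne, hne x ⟨hax, hx.2⟩]
  have hderiv_neg : ∀ x ∈ Ioo a c, f' x < 0 := fun x hx => by
    rcases hasDerivWithinAt_forall_lt_or_forall_gt_of_forall_ne (convex_Ico a c)
      (fun z hz => (hf z (Ico_subset_Icc_self hz)).mono Ico_subset_Icc_self) hderiv_ne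
      with hneg | hpos
    · exact hneg x (Ioo_subset_Ico_self hx)
    · exact absurd ha (hpos a ⟨le_rfl, hx.1.trans hx.2⟩).not_gt
  refine strictAntiOn_of_hasDerivWithinAt_neg (f' := f') (convex_Icc a c)
    (fun x hx => (hf x hx).continuousWithinAt) ?_ ?_
  · exact fun x hx => (hf x (interior_subset hx)).mono interior_subset
  · rwa [interior_Icc]

theorem strictMonoOn_Ici_of_hasDerivWithinAt_ne_zero
    (hf : ∀ x ∈ Ici c, HasDerivWithinAt f (f' x) (Ici c) x) (hne : ∀ x ∈ Ioi c, f' x ≠ 0)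
    (htop : Tendsto f atTop atTop) : StrictMonoOn f (Ici c) := by
  have hcont : ContinuousOn f (Ici c) := fun x hx => (hf x hx).continuousWithinAt
  have hderiv : ∀ x ∈ interior (Ici c), HasDerivWithinAt f (f' x) (interior (Ici c)) x :=
    fun x hx => (hf x (interior_subset hx)).mono interior_subset
  rw [← interior_Ici] at hne
  rcases hasDerivWithinAt_forall_lt_or_forall_gt_of_forall_ne (convex_Ici c).interior hderiv hne
    with hneg | hpos
  · have hanti := strictAntiOn_of_hasDerivWithinAt_neg (convex_Ici c) hcont hderiv hneg
    obtain ⟨x, hcx, hfx⟩ := ((eventually_ge_atTop c).and (htop.eventually_gt_atTop (f c))).exists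
    exact absurd hfx (hanti.antitoneOn self_mem_Ici hcx hcx).not_gt
  · exact strictMonoOn_of_hasDerivWithinAt_pos (convex_Ici c) hcont hderiv hpos

end Darboux

/-- The polynomial `Q` of the SOS model on the Cayley tree of order `k`: the cofactor of `X - 1` in
the diagonal boundary-law polynomial `2 X ^ (k + 1) - τ X ^ k + τ X - 2`. -/
noncomputable def boundaryLawCofactor (k : ℕ) (τ : ℝ) : ℝ[X] :=
  C 2 * X ^ k + C (2 - τ) * ∑ j ∈ Finset.Icc 1 (k - 1), X ^ j + C 2

namespace boundaryLawCofactor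

variable {k : ℕ} (τ : ℝ)

theorem eval_eq (k : ℕ) (a : ℝ) : (boundaryLawCofactor k τ).eval a =
    2 * a ^ k + (2 - τ) * (∑ j ∈ Finset.Icc 1 (k - 1), a ^ j) + 2 := by
  simp [boundaryLawCofactor, eval_finsetSum]

theorem coeff_eq (k n : ℕ) : (boundaryLawCofactor k τ).coeff n =
    (if n = k then 2 else 0) + (if n ∈ Finset.Icc 1 (k - 1) then 2 - τ else 0) +
      if n = 0 then 2 else 0 := by
  simp only [boundaryLawCofactor, coeff_add, coeff_C_mul, finsetSum_coeff, coeff_X_pow, coeff_C,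
    Finset.sum_ite_eq, mul_ite, mul_one, mul_zero]

theorem eval_zero (hk : k ≠ 0) : (boundaryLawCofactor k τ).eval 0 = 2 := by
  simp [← coeff_zero_eq_eval_zero, coeff_eq, hk.symm]

theorem eval_derivative_zero (hk : 2 ≤ k) :
    (boundaryLawCofactor k τ).derivative.eval 0 = 2 - τ := by
  have hne : 1 ≠ k := by omega
  have hle : 1 ≤ k - 1 := by omega
  simp [← coeff_zero_eq_eval_zero, coeff_derivative, coeff_eq, hne, hle]

theorem coeff_self (hk : k ≠ 0) : (boundaryLawCofactor k τ).coeff k = 2 := by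
  have hmem : k ∉ Finset.Icc 1 (k - 1) := by rw [Finset.mem_Icc]; omega
  simp only [coeff_eq, hmem, hk, if_true, if_false, add_zero]

theorem natDegree_eq (hk : k ≠ 0) : (boundaryLawCofactor k τ).natDegree = k := by
  refine natDegree_eq_of_le_of_coeff_ne_zero (natDegree_le_iff_coeff_eq_zero.2 fun n hn => ?_)
    (by simp [coeff_self τ hk])
  have hmem : n ∉ Finset.Icc 1 (k - 1) := by rw [Finset.mem_Icc]; omega
  simp only [coeff_eq, hmem, hn.ne', (pos_of_gt hn).ne', if_false, add_zero]

theorem tendsto_eval_atTop (hk : k ≠ 0) :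
    Tendsto (fun a => (boundaryLawCofactor k τ).eval a) atTop atTop := by
  refine tendsto_atTop_of_leadingCoeff_nonneg _ (natDegree_pos_iff_degree_pos.1 ?_) ?_
  · rw [natDegree_eq τ hk]
    exact hk.pos
  · rw [leadingCoeff, natDegree_eq τ hk, coeff_self τ hk]
    exact zero_le_two

end boundaryLawCofactor

/-- For `τ > 2`, with `Q(a) = 2 a^k + (2 − τ)(a^{k−1} + ⋯ + a) + 2`,
`Q′` its derivative and `a_c` the unique positive root of `Q′`: if `Q(a_c) < 0`
then `Q` has exactly two positive roots; if `Q(a_c) = 0`, exactly one; if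
`Q(a_c) > 0`, none. -/
theorem stmt15 (k : ℕ) (hk : 2 ≤ k) (τ : ℝ) (hτ : 2 < τ) (Q Q' : ℝ → ℝ)
    (hQ : ∀ a : ℝ, Q a = 2 * a ^ k + (2 - τ) * (∑ j ∈ Finset.Icc 1 (k - 1), a ^ j) + 2)
    (hQ' : ∀ a : ℝ, HasDerivAt Q (Q' a) a)
    (ac : ℝ) (hac : 0 < ac) (hroot : Q' ac = 0)
    (huniq : ∀ x : ℝ, 0 < x → Q' x = 0 → x = ac) :
    (Q ac < 0 → {a : ℝ | 0 < a ∧ Q a = 0}.encard = 2) ∧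
      (Q ac = 0 → {a : ℝ | 0 < a ∧ Q a = 0}.encard = 1) ∧
      (0 < Q ac → {a : ℝ | 0 < a ∧ Q a = 0} = ∅) := by
  obtain rfl : Q = fun a => (boundaryLawCofactor k τ).eval a :=
    funext fun a => (hQ a).trans (boundaryLawCofactor.eval_eq τ k a).symm
  have hk0 : k ≠ 0 := by omega
  have htop := boundaryLawCofactor.tendsto_eval_atTop τ hk0
  have hderiv0 : Q' 0 < 0 := by
    rw [(hQ' 0).unique (Polynomial.hasDerivAt _ 0),
      boundaryLawCofactor.eval_derivative_zero τ hk]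
    linarith
  have hanti := strictAntiOn_Icc_of_hasDerivWithinAt_ne_zero
    (fun x _ => (hQ' x).hasDerivWithinAt) hderiv0 fun x hx h => hx.2.ne (huniq x hx.1 h)
  have hmono := strictMonoOn_Ici_of_hasDerivWithinAt_ne_zero
    (fun x _ => (hQ' x).hasDerivWithinAt) (fun x hx h => hx.ne' (huniq x (hac.trans hx) h)) htop
  refine ⟨fun hneg => ?_, fun hzero => ?_, setOf_lt_and_apply_eq_eq_empty hanti hmono⟩
  · exact encard_setOf_lt_and_apply_eq_eq_two (Polynomial.continuousOn _) hanti hmono htop hac.le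
      hneg (by simp [boundaryLawCofactor.eval_zero τ hk0])
  · rw [setOf_lt_and_apply_eq_eq_singleton hanti hmono hac hzero, encard_singleton]
end

section
/- Let k ≥ 2 be an integer and τ a real number, and let a, b > 0 satisfy the two equations (a + b − τ)·b^k + τ·b − 2 = 0 and (a + b − τ)·a^k + τ·a − 2 = 0. If τ·b > 2 and a ≠ b, then a/b is the unique positive root of the polynomial P_b(x) = (x^{k−1} + x^{k−2} + ⋯ + x^2 + x)·(τ·b − 2) − 2; consequently, for fixed b there is at most one a > 0 with a ≠ b such that (a, b) solves the system. -/
open scoped BigOperators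

/-!
With `s = a + b - τ`, both `a` and `b` are roots of the single trinomial `s x ^ k + τ x - 2`.
Eliminating `s` between the two equations and dividing by `b ^ k` gives, for `x = a / b`,
`(x ^ k - x) (τ b - 2) = 2 (x - 1)`; cancelling `x - 1` leaves `P_b x = 0`. A positive root is
unique because `x + ⋯ + x ^ (k - 1)` is strictly increasing on the nonnegative elements. Finally,
the first equation of the system is affine in `a` with slope `b ^ k`, so `b` determines `a`.
-/

theorem strictMonoOn_sum_pow {R : Type*} [Semiring R] [PartialOrder R] [IsStrictOrderedRing R]
    {s : Finset ℕ} (hs : ∃ j ∈ s, j ≠ 0) :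
    StrictMonoOn (fun x : R ↦ ∑ j ∈ s, x ^ j) (Set.Ici 0) := by
  intro x hx y _ hxy
  obtain ⟨j, hj, hj0⟩ := hs
  exact Finset.sum_lt_sum (fun i _ ↦ pow_le_pow_left₀ hx hxy.le i)
    ⟨j, hj, pow_lt_pow_left₀ hxy hx hj0⟩

theorem eq_of_sum_pow_mul_eq {R : Type*} [Ring R] [LinearOrder R] [IsStrictOrderedRing R]
    {s : Finset ℕ} (hs : ∃ j ∈ s, j ≠ 0) {x y c d : R} (hx : 0 ≤ x) (hy : 0 ≤ y) (hd : d ≠ 0)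
    (hxd : (∑ j ∈ s, x ^ j) * c = d) (hyd : (∑ j ∈ s, y ^ j) * c = d) : x = y := by
  have hc : c ≠ 0 := right_ne_zero_of_mul (hxd ▸ hd)
  exact (strictMonoOn_sum_pow hs).injOn hx hy (mul_right_cancel₀ hc (hxd.trans hyd.symm))

theorem sub_mul_pow_eq_of_trinomial_roots {R : Type*} [CommRing R] {s t d a b : R} {k : ℕ}
    (ha : s * a ^ k + t * a - d = 0) (hb : s * b ^ k + t * b - d = 0) :
    (t * b - d) * a ^ k = (t * a - d) * b ^ k := by
  linear_combination a ^ k * hb - b ^ k * ha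

theorem sum_pow_div_mul_eq_of_trinomial_roots {K : Type*} [Field K] {s t d a b : K} {k : ℕ}
    (hk : 1 ≤ k) (hb0 : b ≠ 0) (hab : a ≠ b)
    (ha : s * a ^ k + t * a - d = 0) (hb : s * b ^ k + t * b - d = 0) :
    (∑ j ∈ Finset.Ico 1 k, (a / b) ^ j) * (t * b - d) = d := by
  have hratio : (a / b) ^ k * (t * b - d) = t * a - d := by
    rw [div_pow, div_mul_eq_mul_div, div_eq_iff (pow_ne_zero k hb0), mul_comm]
    exact sub_mul_pow_eq_of_trinomial_roots ha hb
  have hne : a / b - 1 ≠ 0 := sub_ne_zero.2 (mt (div_eq_one_iff_eq hb0).1 hab)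
  apply mul_right_cancel₀ hne
  calc (∑ j ∈ Finset.Ico 1 k, (a / b) ^ j) * (t * b - d) * (a / b - 1)
      = ((a / b) ^ k - (a / b) ^ 1) * (t * b - d) := by
        rw [mul_right_comm, geom_sum_Ico_mul _ hk]
    _ = (t * a - d) - a / b * (t * b - d) := by rw [sub_mul, hratio, pow_one]
    _ = d * (a / b - 1) := by field_simp; ring

theorem stmt18_general {K : Type*} [Field K] [LinearOrder K] [IsStrictOrderedRing K]
    {k : ℕ} (hk : 2 ≤ k) {τ a b : K} (hx : 0 < a / b)
    (h1 : (a + b - τ) * b ^ k + τ * b - 2 = 0)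
    (h2 : (a + b - τ) * a ^ k + τ * a - 2 = 0)
    (hab : a ≠ b) {P : K → K}
    (hP : ∀ x : K, P x = (∑ j ∈ Finset.Icc 1 (k - 1), x ^ j) * (τ * b - 2) - 2) :
    (P (a / b) = 0 ∧ ∀ y : K, 0 < y → P y = 0 → y = a / b) ∧
      ∀ a' : K, (a' + b - τ) * b ^ k + τ * b - 2 = 0 → a' = a := by
  have hb0 : b ≠ 0 := (div_ne_zero_iff.1 hx.ne').2
  have hP_zero (y : K) : P y = 0 ↔ (∑ j ∈ Finset.Ico 1 k, y ^ j) * (τ * b - 2) = 2 := by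
    rw [hP, sub_eq_zero, Finset.Icc_sub_one_right_eq_Ico_of_not_isMin (not_isMin_of_lt hk)]
  have hroot := sum_pow_div_mul_eq_of_trinomial_roots (one_le_two.trans hk) hb0 hab h2 h1
  refine ⟨⟨(hP_zero _).2 hroot, fun y hy hPy ↦ ?_⟩, fun a' h1' ↦ ?_⟩
  · have hs : ∃ j ∈ Finset.Ico 1 k, j ≠ 0 := ⟨1, Finset.mem_Ico.2 ⟨le_rfl, hk⟩, one_ne_zero⟩
    exact eq_of_sum_pow_mul_eq hs hy.le hx.le two_ne_zero ((hP_zero y).1 hPy) hroot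
  · apply mul_right_cancel₀ (pow_ne_zero k hb0)
    linear_combination h1' - h1

/-- If `a, b > 0` solve system (ab), `τ b > 2` and `a ≠ b`, then
`a/b` is the unique positive root of
`P_b(x) = (x^{k−1} + ⋯ + x)(τ b − 2) − 2`; consequently, for fixed `b` there
is at most one `a > 0` with `a ≠ b` solving the system. -/
theorem stmt18 (k : ℕ) (hk : 2 ≤ k) (τ a b : ℝ) (ha : 0 < a) (hb : 0 < b)
    (h1 : (a + b - τ) * b ^ k + τ * b - 2 = 0)
    (h2 : (a + b - τ) * a ^ k + τ * a - 2 = 0)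
    (hτb : 2 < τ * b) (hab : a ≠ b) (P : ℝ → ℝ)
    (hP : ∀ x : ℝ, P x = (∑ j ∈ Finset.Icc 1 (k - 1), x ^ j) * (τ * b - 2) - 2) :
    (0 < a / b ∧ P (a / b) = 0 ∧ ∀ y : ℝ, 0 < y → P y = 0 → y = a / b) ∧
      (∀ a' : ℝ, 0 < a' → a' ≠ b →
        (a' + b - τ) * b ^ k + τ * b - 2 = 0 →
        (a' + b - τ) * a' ^ k + τ * a' - 2 = 0 → a' = a) := by
  obtain ⟨hroot, hunique⟩ := stmt18_general hk (div_pos ha hb) h1 h2 hab hP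
  exact ⟨⟨div_pos ha hb, hroot⟩, fun a' _ _ h1' _ ↦ hunique a' h1'⟩
end
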